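/- Let ρ_AB be a density matrix on ℂ^m ⊗ ℂ^n, let Π_B = {|b_μ⟩⟨b_μ|} be a rank-one PVM on B, and let σ_ABC = V ρ_AB V† for the associated isometry V|ψ⟩_B = Σ_μ |b_μ⟩⟨b_μ|ψ⟩ ⊗ |μ⟩_C. Then S(σ_AB) + S(σ_BC) − S(σ_ABC) − S(σ_B) = Σ_μ p_μ S(ρ_{A,μ}) + S(ρ_B) − S(ρ_AB), where p_μ = ⟨b_μ|ρ_B|b_μ⟩ and, when p_μ > 0, ρ_{A,μ} = (1/p_μ) Tr_B((1_A ⊗ |b_μ⟩⟨b_μ|) ρ_AB). -/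

import Mathlib

open Matrix ComplexOrder
open scoped Kronecker

/-- von Neumann entropy `S(ρ) = -∑ λᵢ log λᵢ` via eigenvalues (0 if not Hermitian). -/
noncomputable def vnEntropy {N : Type*} [Fintype N] [DecidableEq N]
    (A : Matrix N N ℂ) : ℝ :=
  if h : A.IsHermitian then -∑ i, h.eigenvalues i * Real.log (h.eigenvalues i) else 0

/-- Matrix logarithm via the spectral decomposition (with `Real.log 0 = 0` convention). -/
noncomputable def matLog {N : Type*} [Fintype N] [DecidableEq N]
    (A : Matrix N N ℂ) : Matrix N N ℂ :=
  if h : A.IsHermitian then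
    (h.eigenvectorUnitary : Matrix N N ℂ) *
      Matrix.diagonal (fun i => (Real.log (h.eigenvalues i) : ℂ)) *
      star (h.eigenvectorUnitary : Matrix N N ℂ)
  else 0

/-- Positive square root via the spectral decomposition. -/
noncomputable def matSqrt {N : Type*} [Fintype N] [DecidableEq N]
    (A : Matrix N N ℂ) : Matrix N N ℂ :=
  if h : A.IsHermitian then
    (h.eigenvectorUnitary : Matrix N N ℂ) *
      Matrix.diagonal (fun i => (Real.sqrt (h.eigenvalues i) : ℂ)) *
      star (h.eigenvectorUnitary : Matrix N N ℂ)
  else 0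

/-- Inverse square root of a positive definite matrix. -/
noncomputable def matInvSqrt {N : Type*} [Fintype N] [DecidableEq N]
    (A : Matrix N N ℂ) : Matrix N N ℂ :=
  matSqrt A⁻¹

/-- Rank-one projection `|b⟩⟨b|`. -/
noncomputable def proj {n : Type*} (b : n → ℂ) : Matrix n n ℂ :=
  vecMulVec b (star b)

/-- Partial trace over the second (B) tensor factor. -/
noncomputable def ptraceB {m n : Type*} [Fintype n]
    (ρ : Matrix (m × n) (m × n) ℂ) : Matrix m m ℂ :=
  Matrix.of fun i j => ∑ k, ρ (i, k) (j, k)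

/-- Partial trace over the first (A) tensor factor. -/
noncomputable def ptraceA {m n : Type*} [Fintype m]
    (ρ : Matrix (m × n) (m × n) ℂ) : Matrix n n ℂ :=
  Matrix.of fun i j => ∑ k, ρ (k, i) (k, j)


noncomputable def entC {N : Type*} [Fintype N] [DecidableEq N] (A : Matrix N N ℂ) : ℝ :=
  (A.charpoly.roots.map (fun z => Real.negMulLog z.re)).sum

lemma vn_eq_entC {N : Type*} [Fintype N] [DecidableEq N] (A : Matrix N N ℂ)
    (h : A.IsHermitian) : vnEntropy A = entC A := by
  rw [vnEntropy, dif_pos h, entC, h.roots_charpoly_eq_eigenvalues, Multiset.map_map]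
  rw [← Finset.sum_neg_distrib]
  simp [Real.negMulLog]

lemma entC_comm {M N : Type*} [Fintype N] [DecidableEq N] [Fintype M] [DecidableEq M]
    (A : Matrix M N ℂ) (B : Matrix N M ℂ) : entC (A * B) = entC (B * A) := by
  have h := congrArg Polynomial.roots (Matrix.charpoly_mul_comm' A B)
  rw [Polynomial.roots_mul (mul_ne_zero (pow_ne_zero _ Polynomial.X_ne_zero)
      (Matrix.charpoly_monic _).ne_zero),
    Polynomial.roots_mul (mul_ne_zero (pow_ne_zero _ Polynomial.X_ne_zero)
      (Matrix.charpoly_monic _).ne_zero), Polynomial.roots_X_pow, Polynomial.roots_X_pow] at h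
  have h2 := congrArg (fun s => (Multiset.map (fun z : ℂ => Real.negMulLog z.re) s).sum) h
  simpa [entC, Multiset.map_nsmul, Multiset.sum_nsmul] using h2

lemma entC_conj {M N : Type*} [Fintype N] [DecidableEq N] [Fintype M] [DecidableEq M]
    (W : Matrix M N ℂ) (A : Matrix N N ℂ) (hW : Wᴴ * W = 1) : entC (W * A * Wᴴ) = entC A := by
  rw [entC_comm, ← Matrix.mul_assoc, hW, Matrix.one_mul]

lemma entC_diagonal {N : Type*} [Fintype N] [DecidableEq N] (d : N → ℂ) :
    entC (Matrix.diagonal d) = ∑ i, Real.negMulLog (d i).re := by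
  rw [entC, Matrix.charpoly_diagonal, Polynomial.roots_prod _ _ (by simp [Finset.prod_ne_zero_iff, Polynomial.X_sub_C_ne_zero])]
  simp

lemma charpoly_blockDiag {M N : Type*} [Fintype N] [DecidableEq N] [Fintype M] [DecidableEq M]
    (R : N → Matrix M M ℂ) : (Matrix.blockDiagonal R).charpoly = ∏ c, (R c).charpoly := by
  unfold Matrix.charpoly
  rw [← Matrix.det_blockDiagonal]
  congr 1
  ext1 ⟨i, c⟩ ⟨j, d⟩
  by_cases hcd : c = d
  · subst hcd
    simp [Matrix.charmatrix_apply, Matrix.blockDiagonal_apply, Matrix.diagonal_apply]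
  · simp [Matrix.charmatrix_apply, Matrix.blockDiagonal_apply, Matrix.diagonal_apply, hcd]

lemma entC_blockDiag {M N : Type*} [Fintype N] [DecidableEq N] [Fintype M] [DecidableEq M]
    (R : N → Matrix M M ℂ) : entC (Matrix.blockDiagonal R) = ∑ c, entC (R c) := by
  rw [entC, charpoly_blockDiag, Polynomial.roots_prod _ _
    (Finset.prod_ne_zero_iff.2 fun c _ => (Matrix.charpoly_monic _).ne_zero)]
  rw [Multiset.map_bind, Multiset.sum_bind]
  rfl

lemma entC_smul {N : Type*} [Fintype N] [DecidableEq N] (A : Matrix N N ℂ)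
    (h : A.IsHermitian) (p : ℝ) :
    entC ((p : ℂ) • A) = p * entC A + A.trace.re * Real.negMulLog p := by
  have hU : ((h.eigenvectorUnitary : Matrix N N ℂ))ᴴ * (h.eigenvectorUnitary : Matrix N N ℂ) = 1 :=
    Unitary.coe_star_mul_self _
  have hA : A = (h.eigenvectorUnitary : Matrix N N ℂ) *
      Matrix.diagonal (fun i => (h.eigenvalues i : ℂ)) *
      ((h.eigenvectorUnitary : Matrix N N ℂ))ᴴ := h.spectral_theorem
  have h1 : entC A = ∑ i, Real.negMulLog (h.eigenvalues i) := by
    conv_lhs => rw [hA]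
    rw [entC_conj _ _ hU, entC_diagonal]
    simp
  have h2 : entC ((p : ℂ) • A) = ∑ i, Real.negMulLog (p * h.eigenvalues i) := by
    conv_lhs => rw [hA]
    rw [← Matrix.smul_mul, ← Matrix.mul_smul, entC_conj _ _ hU, ← Matrix.diagonal_smul,
      entC_diagonal]
    simp
  have h3 : A.trace.re = ∑ i, h.eigenvalues i := by
    rw [h.trace_eq_sum_eigenvalues]
    simp
  rw [h1, h2, h3, Finset.mul_sum, Finset.sum_mul, ← Finset.sum_add_distrib]
  refine Finset.sum_congr rfl fun i _ => ?_
  rw [Real.negMulLog_mul]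
  ring

lemma kron_conj_apply {m n q : Type*} [Fintype m] [DecidableEq m] [Fintype n]
    (V : Matrix q n ℂ) (M : Matrix (m × n) (m × n) ℂ) (i j : m) (x y : q) :
    (((1 : Matrix m m ℂ) ⊗ₖ V) * M * ((1 : Matrix m m ℂ) ⊗ₖ V)ᴴ) (i, x) (j, y) =
      ∑ k, ∑ l, V x k * M (i, k) (j, l) * star (V y l) := by
  rw [Finset.sum_comm]
  simp [Matrix.mul_apply, Fintype.sum_prod_type, Matrix.one_apply, Finset.sum_mul,
    Matrix.conjTranspose_apply, apply_ite, ite_mul, Finset.sum_ite_irrel]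

lemma conj_apply' {n q : Type*} [Fintype n]
    (V : Matrix q n ℂ) (M : Matrix n n ℂ) (x y : q) :
    (V * M * Vᴴ) x y = ∑ k, ∑ l, V x k * M k l * star (V y l) := by
  rw [Finset.sum_comm]
  simp [Matrix.mul_apply, Finset.sum_mul]

lemma kron_iso {m n q : Type*} [Fintype m] [DecidableEq m] [Fintype n] [DecidableEq n] [Fintype q]
    (V : Matrix q n ℂ) (h : Vᴴ * V = 1) :
    ((1 : Matrix m m ℂ) ⊗ₖ V)ᴴ * ((1 : Matrix m m ℂ) ⊗ₖ V) = 1 := by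
  rw [Matrix.conjTranspose_kronecker, ← Matrix.mul_kronecker_mul, h]
  simp

lemma herm_conj {n q : Type*} [Fintype n]
    (V : Matrix q n ℂ) (M : Matrix n n ℂ) (h : M.IsHermitian) : (V * M * Vᴴ).IsHermitian :=
  Matrix.isHermitian_mul_mul_conjTranspose V h

lemma ptraceA_conj {m n q : Type*} [Fintype m] [DecidableEq m] [Fintype n] [Fintype q]
    (V : Matrix q n ℂ) (M : Matrix (m × n) (m × n) ℂ) :
    ptraceA (((1 : Matrix m m ℂ) ⊗ₖ V) * M * ((1 : Matrix m m ℂ) ⊗ₖ V)ᴴ) =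
      V * ptraceA M * Vᴴ := by
  ext x y
  rw [conj_apply']
  simp only [ptraceA, Matrix.of_apply, kron_conj_apply, Finset.mul_sum, Finset.sum_mul]
  rw [Finset.sum_comm]
  refine Finset.sum_congr rfl fun k _ => ?_
  rw [Finset.sum_comm]

lemma ptraceA_herm {m n : Type*} [Fintype m] (M : Matrix (m × n) (m × n) ℂ)
    (h : M.IsHermitian) : (ptraceA M).IsHermitian := by
  ext i j
  simp only [ptraceA, Matrix.conjTranspose_apply, Matrix.of_apply, star_sum]
  exact Finset.sum_congr rfl fun k _ => h.apply _ _

/-- Unnormalised conditional state. -/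
noncomputable def condR {m n : ℕ} (ρ : Matrix (Fin m × Fin n) (Fin m × Fin n) ℂ)
    (v : Fin n → ℂ) : Matrix (Fin m) (Fin m) ℂ :=
  Matrix.of fun i j => ∑ k, ∑ l, star (v k) * ρ (i, k) (j, l) * v l

lemma condR_posSemidef {m n : ℕ} (ρ : Matrix (Fin m × Fin n) (Fin m × Fin n) ℂ)
    (h : ρ.PosSemidef) (v : Fin n → ℂ) : (condR ρ v).PosSemidef := by
  have h1 := h.mul_mul_conjTranspose_same
    ((1 : Matrix (Fin m) (Fin m) ℂ) ⊗ₖ (Matrix.of fun (_ : Unit) k => star (v k)))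
  have h2 := h1.submatrix (fun i : Fin m => (i, ()))
  convert h2 using 1
  ext i j
  rw [Matrix.submatrix_apply, kron_conj_apply]
  simp [condR]

lemma ptraceB_proj {m n : ℕ} (ρ : Matrix (Fin m × Fin n) (Fin m × Fin n) ℂ)
    (v : Fin n → ℂ) :
    ptraceB (((1 : Matrix (Fin m) (Fin m) ℂ) ⊗ₖ proj v) * ρ) = condR ρ v := by
  ext i j
  simp only [ptraceB, condR, Matrix.of_apply, proj, Matrix.mul_apply, Fintype.sum_prod_type,
    Matrix.kroneckerMap_apply, Matrix.one_apply, Matrix.vecMulVec_apply, ite_mul, one_mul, zero_mul,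
    Finset.sum_ite_irrel, Finset.sum_const_zero, Finset.sum_ite_eq, Finset.mem_univ, if_true]
  rw [Finset.sum_comm]
  refine Finset.sum_congr rfl fun k _ => Finset.sum_congr rfl fun l _ => ?_
  simp only [Pi.star_apply]
  ring

lemma condR_trace {m n : ℕ} (ρ : Matrix (Fin m × Fin n) (Fin m × Fin n) ℂ)
    (v : Fin n → ℂ) : (condR ρ v).trace = star v ⬝ᵥ ptraceA ρ *ᵥ v := by
  simp only [Matrix.trace, Matrix.diag, condR, ptraceA, Matrix.of_apply, dotProduct, Matrix.mulVec,
    Finset.mul_sum, Finset.sum_mul, Pi.star_apply]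
  rw [Finset.sum_comm]
  refine Finset.sum_congr rfl fun k _ => ?_
  rw [Finset.sum_comm]
  refine Finset.sum_congr rfl fun l _ => Finset.sum_congr rfl fun i _ => ?_
  ring

theorem stmt15 {m n : ℕ}
    (ρAB : Matrix (Fin m × Fin n) (Fin m × Fin n) ℂ)
    (hρ : ρAB.PosSemidef) (htr : ρAB.trace = 1)
    (b : Fin n → Fin n → ℂ)
    (hon : ∀ μ ν, star (b μ) ⬝ᵥ b ν = if μ = ν then 1 else 0)
    (V : Matrix (Fin n × Fin n) (Fin n) ℂ)
    (hV : V = Matrix.of fun kc j => b kc.2 kc.1 * star (b kc.2 j))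
    (σABC : Matrix (Fin m × (Fin n × Fin n)) (Fin m × (Fin n × Fin n)) ℂ)
    (hσ : σABC = ((1 : Matrix (Fin m) (Fin m) ℂ) ⊗ₖ V) * ρAB *
      ((1 : Matrix (Fin m) (Fin m) ℂ) ⊗ₖ V)ᴴ)
    (ρB : Matrix (Fin n) (Fin n) ℂ) (hρB : ρB = ptraceA ρAB)
    (p : Fin n → ℝ) (hp : ∀ μ, p μ = (star (b μ) ⬝ᵥ ρB *ᵥ b μ).re) :
    vnEntropy (Matrix.of fun (i j : Fin m × Fin n) =>
        ∑ cc, σABC (i.1, (i.2, cc)) (j.1, (j.2, cc))) +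
      vnEntropy (ptraceA σABC) - vnEntropy σABC -
      vnEntropy (ptraceB (ptraceA σABC)) =
    (∑ μ, p μ * vnEntropy (((p μ : ℂ))⁻¹ •
        ptraceB (((1 : Matrix (Fin m) (Fin m) ℂ) ⊗ₖ proj (b μ)) * ρAB))) +
      vnEntropy ρB - vnEntropy ρAB := by
  set B : Matrix (Fin n) (Fin n) ℂ := Matrix.of fun k c => b c k with hB
  have hBB : Bᴴ * B = 1 := by
    ext μ ν
    have := hon μ ν
    simpa [Matrix.mul_apply, hB, dotProduct, Matrix.one_apply] using this
  have hBB' : B * Bᴴ = 1 := mul_eq_one_comm.1 hBB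
  have hVV : Vᴴ * V = 1 := by
    rw [← hBB']
    ext i j
    simp only [hV, hB, Matrix.mul_apply, Matrix.conjTranspose_apply, Matrix.of_apply,
      Fintype.sum_prod_type]
    rw [Finset.sum_comm]
    refine Finset.sum_congr rfl fun c _ => ?_
    have h1 : ∑ k, star (b c k) * b c k = 1 := by
      simpa [dotProduct] using hon c c
    calc _ = (∑ k, star (b c k) * b c k) * (b c i * star (b c j)) := by
          rw [Finset.sum_mul]
          refine Finset.sum_congr rfl fun k _ => ?_
          simp only [star_mul', star_star]
          ring
      _ = _ := by rw [h1, one_mul]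
  have hρBh : ρB.IsHermitian := hρB ▸ ptraceA_herm _ hρ.1
  -- the four entropies
  have e1 : vnEntropy σABC = vnEntropy ρAB := by
    rw [vn_eq_entC _ hρ.1, vn_eq_entC _ (hσ ▸ herm_conj _ _ hρ.1), hσ,
      entC_conj _ _ (kron_iso V hVV)]
  have hBC : ptraceA σABC = V * ρB * Vᴴ := by rw [hσ, ptraceA_conj, hρB]
  have e2 : vnEntropy (ptraceA σABC) = vnEntropy ρB := by
    rw [hBC, vn_eq_entC _ hρBh, vn_eq_entC _ (herm_conj _ _ hρBh), entC_conj _ _ hVV]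
  have hR : ∀ c, (condR ρAB (b c)).PosSemidef := fun c => condR_posSemidef _ hρ _
  have htrR : ∀ c, (condR ρAB (b c)).trace = (p c : ℂ) := by
    intro c
    have h0 := (hR c).trace_nonneg
    have h1 : p c = ((condR ρAB (b c)).trace).re := by rw [hp, condR_trace, hρB]
    rw [h1]
    apply Complex.ext
    · simp
    · simpa using (Complex.le_def.1 h0).2.symm
  have hσB : ptraceB (ptraceA σABC) = B * Matrix.diagonal (fun c => (p c : ℂ)) * Bᴴ := by
    ext x y
    rw [hBC]
    simp only [ptraceB, Matrix.of_apply, conj_apply']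
    simp only [← htrR, condR_trace, ← hρB]
    refine Eq.trans (b := ∑ c, B x c * (star (b c) ⬝ᵥ ρB *ᵥ b c) * star (B y c)) ?_ ?_
    · refine Finset.sum_congr rfl fun c _ => ?_
      simp only [hV, hB, dotProduct, Matrix.mulVec, Matrix.of_apply, Pi.star_apply,
        Finset.mul_sum, Finset.sum_mul, star_mul', star_star]
      refine Finset.sum_congr rfl fun k _ => Finset.sum_congr rfl fun l _ => ?_
      ring
    · simp [Matrix.diagonal_apply]
  have e3 : vnEntropy (ptraceB (ptraceA σABC)) = ∑ c, Real.negMulLog (p c) := by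
    rw [hσB, vn_eq_entC _ (herm_conj _ _ ?_), entC_conj _ _ hBB, entC_diagonal]
    · simp
    · rw [Matrix.isHermitian_diagonal_iff]
      intro c
      simp [isSelfAdjoint_iff]
  have hσAB : (Matrix.of fun (i j : Fin m × Fin n) =>
        ∑ cc, σABC (i.1, (i.2, cc)) (j.1, (j.2, cc))) =
      ((1 : Matrix (Fin m) (Fin m) ℂ) ⊗ₖ B) * Matrix.blockDiagonal (fun c => condR ρAB (b c)) *
      ((1 : Matrix (Fin m) (Fin m) ℂ) ⊗ₖ B)ᴴ := by
    ext ⟨i, x⟩ ⟨j, y⟩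
    rw [kron_conj_apply, Matrix.of_apply, hσ]
    simp only [kron_conj_apply]
    refine Eq.trans (b := ∑ c, B x c * condR ρAB (b c) i j * star (B y c)) ?_ ?_
    · refine Finset.sum_congr rfl fun c _ => ?_
      simp only [hV, hB, condR, Matrix.of_apply,
        Finset.mul_sum, Finset.sum_mul, star_mul', star_star]
      refine Finset.sum_congr rfl fun k _ => Finset.sum_congr rfl fun l _ => ?_
      ring
    · simp [Matrix.blockDiagonal_apply]
  have hbd : (Matrix.blockDiagonal (fun c => condR ρAB (b c))).IsHermitian := by
    unfold Matrix.IsHermitian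
    rw [Matrix.blockDiagonal_conjTranspose]
    congr 1
    funext c
    exact (hR c).1
  have e4 : vnEntropy (Matrix.of fun (i j : Fin m × Fin n) =>
        ∑ cc, σABC (i.1, (i.2, cc)) (j.1, (j.2, cc))) = ∑ c, entC (condR ρAB (b c)) := by
    rw [hσAB, vn_eq_entC _ (herm_conj _ _ hbd), entC_conj _ _ (kron_iso B hBB), entC_blockDiag]
  have e5 : ∀ c, entC (condR ρAB (b c)) = p c * vnEntropy (((p c : ℂ))⁻¹ •
        ptraceB (((1 : Matrix (Fin m) (Fin m) ℂ) ⊗ₖ proj (b c)) * ρAB)) + Real.negMulLog (p c) := by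
    intro c
    rw [ptraceB_proj]
    by_cases hc : p c = 0
    · have h0 : condR ρAB (b c) = 0 := by
        rw [← (hR c).trace_eq_zero_iff, htrR, hc, Complex.ofReal_zero]
      rw [h0, hc]
      simp [entC, Matrix.charpoly_zero, Multiset.map_nsmul, Multiset.sum_nsmul]
    · have hc' : (p c : ℂ) ≠ 0 := by exact_mod_cast hc
      have hX : ((p c : ℂ)⁻¹ • condR ρAB (b c)).IsHermitian := by
        unfold Matrix.IsHermitian
        rw [Matrix.conjTranspose_smul, (hR c).1]
        simp
      have := entC_smul _ hX (p c)
      rw [smul_smul, mul_inv_cancel₀ hc', one_smul, Matrix.trace_smul, htrR, smul_eq_mul,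
        inv_mul_cancel₀ hc'] at this
      rw [this, vn_eq_entC _ hX]
      simp
  rw [e1, e2, e3, e4, Finset.sum_congr rfl fun c _ => e5 c, Finset.sum_add_distrib]
  ring
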